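/- The subgroup of G_{d,q} generated by the elements γ ∈ G_{d,q} having 1 as an eigenvalue of multiplicity exactly 2 (i.e. those γ ≠ 1 whose eigenspace ker(γ − I₃) has dimension 2) equals the set of diagonal matrices { diag(ξ^{(q³+1)a}, ξ^{(q³+1)b}, ξ^{(q³+1)c}) : a, b, c ∈ ℤ }. -/

import Mathlib

open Matrix

/-- diagonal unit with entries powers of `u`. -/
noncomputable def TT (u : ℂˣ) (x y z : ℤ) : (Matrix (Fin 3) (Fin 3) ℂ)ˣ where
  val := Matrix.diagonal ![((u ^ x : ℂˣ) : ℂ), ((u ^ y : ℂˣ) : ℂ), ((u ^ z : ℂˣ) : ℂ)]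
  inv := Matrix.diagonal ![((u ^ (-x) : ℂˣ) : ℂ), ((u ^ (-y) : ℂˣ) : ℂ), ((u ^ (-z) : ℂˣ) : ℂ)]
  val_inv := by
    rw [Matrix.diagonal_mul_diagonal, ← Matrix.diagonal_one]
    congr 1
    funext i
    fin_cases i <;> simp [zpow_ne_zero]
  inv_val := by
    rw [Matrix.diagonal_mul_diagonal, ← Matrix.diagonal_one]
    congr 1
    funext i
    fin_cases i <;> simp [zpow_ne_zero]

lemma TT_val (u : ℂˣ) (x y z : ℤ) : (TT u x y z : Matrix (Fin 3) (Fin 3) ℂ) =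
    Matrix.diagonal ![(u : ℂ) ^ x, (u : ℂ) ^ y, (u : ℂ) ^ z] := by
  simp [TT]

lemma TT_mul (u : ℂˣ) (x y z x' y' z' : ℤ) :
    TT u x y z * TT u x' y' z' = TT u (x + x') (y + y') (z + z') := by
  apply Units.ext
  rw [Units.val_mul, TT_val, TT_val, TT_val, Matrix.diagonal_mul_diagonal]
  congr 1
  funext i
  fin_cases i <;> simp [zpow_add₀]

lemma TT_zero (u : ℂˣ) : TT u 0 0 0 = 1 := by
  apply Units.ext
  rw [TT_val, Units.val_one, ← Matrix.diagonal_one]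
  congr 1
  funext i
  fin_cases i <;> simp

lemma TT_inv (u : ℂˣ) (x y z : ℤ) : (TT u x y z)⁻¹ = TT u (-x) (-y) (-z) := by
  rw [inv_eq_iff_mul_eq_one, TT_mul]
  simp [TT_zero]

lemma TT_pow (u : ℂˣ) (x y z : ℤ) (n : ℤ) :
    (TT u x y z) ^ n = TT u (n * x) (n * y) (n * z) := by
  induction n using Int.induction_on with
  | zero => simp [TT_zero]
  | succ n ih => rw [_root_.zpow_add_one, ih, TT_mul]; congr 1 <;> ring
  | pred n ih => rw [_root_.zpow_sub_one, ih, TT_inv, TT_mul]; congr 1 <;> ring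

lemma B_TT (B : (Matrix (Fin 3) (Fin 3) ℂ)ˣ)
    (hB : (B : Matrix (Fin 3) (Fin 3) ℂ) = !![0,1,0; 0,0,1; 1,0,0]) (u : ℂˣ) (x y z : ℤ) :
    B * TT u x y z = TT u y z x * B := by
  apply Units.ext
  rw [Units.val_mul, Units.val_mul, TT_val, TT_val, hB]
  ext i j
  fin_cases i <;> fin_cases j <;> simp [Matrix.mul_apply, Fin.sum_univ_three, Matrix.diagonal]

lemma B_inv_TT (B : (Matrix (Fin 3) (Fin 3) ℂ)ˣ)
    (hB : (B : Matrix (Fin 3) (Fin 3) ℂ) = !![0,1,0; 0,0,1; 1,0,0]) (u : ℂˣ) (x y z : ℤ) :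
    B⁻¹ * TT u y z x = TT u x y z * B⁻¹ := by
  rw [inv_mul_eq_iff_eq_mul, ← mul_assoc, B_TT B hB, mul_assoc]
  simp

lemma B_cube (B : (Matrix (Fin 3) (Fin 3) ℂ)ˣ)
    (hB : (B : Matrix (Fin 3) (Fin 3) ℂ) = !![0,1,0; 0,0,1; 1,0,0]) : B ^ 3 = 1 := by
  apply Units.ext
  rw [Units.val_pow_eq_pow_val, hB]
  ext i j
  fin_cases i <;> fin_cases j <;> simp [pow_succ, Matrix.mul_apply, Fin.sum_univ_three]

/-- The lattice element. -/
noncomputable def LL (u : ℂˣ) (q : ℕ) (a b c : ℤ) : (Matrix (Fin 3) (Fin 3) ℂ)ˣ :=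
  TT u (b + c * q) (a + b * q) (a * q + c)

lemma mem_form (u : ℂˣ) (q : ℕ) (B : (Matrix (Fin 3) (Fin 3) ℂ)ˣ)
    (hB : (B : Matrix (Fin 3) (Fin 3) ℂ) = !![0,1,0; 0,0,1; 1,0,0])
    (g : (Matrix (Fin 3) (Fin 3) ℂ)ˣ) (hg : g ∈ Subgroup.closure {TT u 0 1 q, B}) :
    ∃ a b c k : ℤ, g = LL u q a b c * B ^ k := by
  induction hg using Subgroup.closure_induction_left with
  | one => exact ⟨0, 0, 0, 0, by simp [LL, TT_zero]⟩
  | mul_left x hx y hy ih =>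
    obtain ⟨a, b, c, k, rfl⟩ := ih
    rcases hx with rfl | rfl
    · refine ⟨a + 1, b, c, k, ?_⟩
      rw [← mul_assoc, LL, TT_mul, LL]
      congr 2 <;> ring
    · refine ⟨c, a, b, k + 1, ?_⟩
      rw [← mul_assoc, LL, B_TT _ hB, LL, add_comm k 1, _root_.zpow_add, zpow_one, mul_assoc]
      congr 2 <;> ring
  | inv_mul_cancel x hx y hy ih =>
    obtain ⟨a, b, c, k, rfl⟩ := ih
    rcases hx with rfl | rfl
    · refine ⟨a - 1, b, c, k, ?_⟩
      rw [← mul_assoc, LL, TT_inv, TT_mul, LL]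
      congr 2 <;> ring
    · refine ⟨b, c, a, k - 1, ?_⟩
      rw [← mul_assoc, LL, B_inv_TT _ hB, LL, mul_assoc, show k - 1 = -1 + k by ring, _root_.zpow_add,
        _root_.zpow_neg_one]
      congr 2 <;> ring

lemma LL_mem (u : ℂˣ) (q : ℕ) (B : (Matrix (Fin 3) (Fin 3) ℂ)ˣ)
    (hB : (B : Matrix (Fin 3) (Fin 3) ℂ) = !![0,1,0; 0,0,1; 1,0,0]) (a b c : ℤ) :
    LL u q a b c ∈ Subgroup.closure {TT u 0 1 q, B} := by
  have h1 : TT u 0 1 q ∈ Subgroup.closure {TT u 0 1 q, B} := Subgroup.subset_closure (by simp)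
  have h2 : B ∈ Subgroup.closure {TT u 0 1 q, B} := Subgroup.subset_closure (by simp)
  have h3 : TT u 1 q 0 ∈ Subgroup.closure {TT u 0 1 q, B} := by
    have : TT u 1 q 0 = B * TT u 0 1 q * B⁻¹ := by rw [B_TT B hB]; simp
    rw [this]
    exact mul_mem (mul_mem h2 h1) (inv_mem h2)
  have h4 : TT u q 0 1 ∈ Subgroup.closure {TT u 0 1 q, B} := by
    have : TT u q 0 1 = B * TT u 1 q 0 * B⁻¹ := by rw [B_TT B hB]; simp
    rw [this]
    exact mul_mem (mul_mem h2 h3) (inv_mem h2)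
  have : LL u q a b c = TT u 0 1 q ^ a * TT u 1 q 0 ^ b * TT u q 0 1 ^ c := by
    simp only [TT_pow, TT_mul, LL]
    congr 1 <;> ring
  rw [this]
  exact mul_mem (mul_mem (zpow_mem h1 _) (zpow_mem h3 _)) (zpow_mem h4 _)

lemma finrank_le (M : Matrix (Fin 3) (Fin 3) ℂ) (i : Fin 3)
    (h : ∀ v : Fin 3 → ℂ, M *ᵥ v = 0 → v i = 0 → v = 0) :
    Module.finrank ℂ (LinearMap.ker (Matrix.toLin' M)) ≤ 1 := by
  have := LinearMap.finrank_le_finrank_of_injective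
    (f := (LinearMap.proj i : (Fin 3 → ℂ) →ₗ[ℂ] ℂ) ∘ₗ (LinearMap.ker (Matrix.toLin' M)).subtype) (by
      rw [injective_iff_map_eq_zero]
      rintro ⟨v, hv⟩ h0
      ext1
      exact h v (by simpa using hv) (by simpa using h0))
  simpa using this

lemma mem_of_eq_one {G : Type*} [Group G] {g : G} (H : Subgroup G) (h : g = 1) : g ∈ H := by
  rw [h]; exact H.one_mem

lemma finrank_diag (w : Fin 3 → ℂ) :
    Module.finrank ℂ (LinearMap.ker (Matrix.toLin' (Matrix.diagonal w)))
      + Nat.card {i // w i ≠ 0} = 3 := by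
  have h1 := LinearMap.finrank_range_add_finrank_ker (Matrix.toLin' (Matrix.diagonal w))
  have h2 : (Matrix.diagonal w).rank = Nat.card {i // w i ≠ 0} := by
    classical
    rw [Matrix.rank_diagonal w]
    rw [Nat.card_eq_fintype_card]
  rw [Matrix.rank, ← Matrix.toLin'_apply'] at h2
  rw [h2, Module.finrank_fin_fun] at h1
  omega

lemma TT_sub_one (u : ℂˣ) (x y z : ℤ) : (TT u x y z : Matrix (Fin 3) (Fin 3) ℂ) - 1 =
    Matrix.diagonal (![(u : ℂ) ^ x, (u : ℂ) ^ y, (u : ℂ) ^ z] - 1) := by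
  rw [TT_val, ← Matrix.diagonal_one, Matrix.diagonal_sub]
  rfl

lemma refl_rank (u : ℂˣ) (x y z : ℤ) (j : Fin 3)
    (h : ∀ i, ![(u : ℂ) ^ x, (u : ℂ) ^ y, (u : ℂ) ^ z] i ≠ 1 ↔ i = j) :
    Module.finrank ℂ (LinearMap.ker
      (Matrix.toLin' ((TT u x y z : Matrix (Fin 3) (Fin 3) ℂ) - 1))) = 2 := by
  rw [TT_sub_one]
  classical
  have h1 := finrank_diag (![(u : ℂ) ^ x, (u : ℂ) ^ y, (u : ℂ) ^ z] - 1)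
  have h2 : Nat.card {i : Fin 3 // (![(u : ℂ) ^ x, (u : ℂ) ^ y, (u : ℂ) ^ z] - 1 : Fin 3 → ℂ) i ≠ 0} = 1 := by
    rw [Nat.card_eq_fintype_card, Fintype.card_eq_one_iff]
    refine ⟨⟨j, ?_⟩, ?_⟩
    · rw [Pi.sub_apply, Pi.one_apply, sub_ne_zero]
      exact (h j).2 rfl
    · rintro ⟨i, hi⟩
      rw [Pi.sub_apply, Pi.one_apply, sub_ne_zero] at hi
      ext1
      exact (h i).1 hi
  omega

lemma refl_case (u : ℂˣ) (q : ℕ) (a b c : ℤ)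
    (hr : Module.finrank ℂ (LinearMap.ker
      (Matrix.toLin' ((LL u q a b c : Matrix (Fin 3) (Fin 3) ℂ) - 1))) = 2) :
    ∃ a' b' c' : ℤ, LL u q a b c = TT u (((q : ℤ) ^ 3 + 1) * a') (((q : ℤ) ^ 3 + 1) * b')
      (((q : ℤ) ^ 3 + 1) * c') := by
  rw [LL] at hr ⊢
  set x := b + c * (q : ℤ) with hx
  set y := a + b * (q : ℤ) with hy
  set z := a * (q : ℤ) + c with hz
  rw [TT_sub_one] at hr
  classical
  have h1 := finrank_diag (![(u : ℂ) ^ x, (u : ℂ) ^ y, (u : ℂ) ^ z] - 1)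
  have h2 : Nat.card {i : Fin 3 // (![(u : ℂ) ^ x, (u : ℂ) ^ y, (u : ℂ) ^ z] - 1 : Fin 3 → ℂ) i ≠ 0} = 1 := by
    omega
  rw [Nat.card_eq_fintype_card, Fintype.card_eq_one_iff] at h2
  obtain ⟨⟨j, hj⟩, h⟩ := h2
  have h' : ∀ i, i ≠ j → ![(u : ℂ) ^ x, (u : ℂ) ^ y, (u : ℂ) ^ z] i = 1 := by
    intro i hij
    by_contra hi
    exact hij (congrArg Subtype.val (h ⟨i, by
      rw [Pi.sub_apply, Pi.one_apply, sub_ne_zero]; exact hi⟩))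
  have e0 : j ≠ 0 → (u : ℂ) ^ x = 1 := fun hh => h' 0 hh.symm
  have e1 : j ≠ 1 → (u : ℂ) ^ y = 1 := fun hh => h' 1 hh.symm
  have e2 : j ≠ 2 → (u : ℂ) ^ z = 1 := fun hh => h' 2 hh.symm
  clear h h' hj h1 hr
  have key : ∀ s t r w : ℤ, (u : ℂ) ^ s = 1 → (u : ℂ) ^ t = 1 →
      r = w + s * (-q ^ 2) + t * q → (u : ℂ) ^ r = (u : ℂ) ^ w := by
    intro s t r w hs ht e
    rw [e, zpow_add₀ u.ne_zero, zpow_add₀ u.ne_zero, _root_.zpow_mul, _root_.zpow_mul, hs, ht]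
    simp
  have hj3 : j = 0 ∨ j = 1 ∨ j = 2 := by fin_cases j <;> simp
  rcases hj3 with rfl | rfl | rfl
  · have f1 := e1 (by decide)
    have f2 := e2 (by decide)
    refine ⟨b, 0, 0, ?_⟩
    apply Units.ext
    rw [TT_val, TT_val, f1, f2, key y z x (((q : ℤ) ^ 3 + 1) * b) f1 f2 (by rw [hx, hy, hz]; ring)]
    simp
  · have f0 := e0 (by decide)
    have f2 := e2 (by decide)
    refine ⟨0, a, 0, ?_⟩
    apply Units.ext
    rw [TT_val, TT_val, f0, f2, key z x y (((q : ℤ) ^ 3 + 1) * a) f2 f0 (by rw [hx, hy, hz]; ring)]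
    simp
  · have f0 := e0 (by decide)
    have f1 := e1 (by decide)
    refine ⟨0, 0, c, ?_⟩
    apply Units.ext
    rw [TT_val, TT_val, f0, f1, key x y z (((q : ℤ) ^ 3 + 1) * c) f0 f1 (by rw [hx, hy, hz]; ring)]
    simp

lemma k1 (u : ℂˣ) (B : (Matrix (Fin 3) (Fin 3) ℂ)ˣ)
    (hB : (B : Matrix (Fin 3) (Fin 3) ℂ) = !![0,1,0; 0,0,1; 1,0,0]) (x y z : ℤ)
    (v : Fin 3 → ℂ)
    (h : (((TT u x y z * B : (Matrix (Fin 3) (Fin 3) ℂ)ˣ) : Matrix (Fin 3) (Fin 3) ℂ) - 1) *ᵥ v = 0)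
    (h0 : v 0 = 0) : v = 0 := by
  rw [Units.val_mul, hB, TT_val, Matrix.sub_mulVec, Matrix.one_mulVec, sub_eq_zero,
    ← Matrix.mulVec_mulVec] at h
  have e1 := congrFun h 1
  have e2 := congrFun h 2
  simp [Matrix.mulVec_diagonal, Matrix.mulVec, dotProduct, Fin.sum_univ_three, h0] at e1 e2
  have e2 := e2.symm
  rw [e2] at e1
  funext i
  fin_cases i
  · exact h0
  · simpa using e1.symm
  · exact e2

lemma k2 (u : ℂˣ) (B : (Matrix (Fin 3) (Fin 3) ℂ)ˣ)
    (hB : (B : Matrix (Fin 3) (Fin 3) ℂ) = !![0,1,0; 0,0,1; 1,0,0]) (x y z : ℤ)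
    (v : Fin 3 → ℂ)
    (h : (((TT u x y z * B ^ (2 : ℤ) : (Matrix (Fin 3) (Fin 3) ℂ)ˣ) :
      Matrix (Fin 3) (Fin 3) ℂ) - 1) *ᵥ v = 0)
    (h0 : v 0 = 0) : v = 0 := by
  rw [show B ^ (2 : ℤ) = B * B from zpow_two B, Units.val_mul, Units.val_mul, hB, TT_val,
    Matrix.sub_mulVec, Matrix.one_mulVec, sub_eq_zero,
    ← Matrix.mulVec_mulVec, ← Matrix.mulVec_mulVec] at h
  have e1 := congrFun h 1
  have e2 := congrFun h 2
  simp [Matrix.mulVec_diagonal, Matrix.mulVec, dotProduct, Fin.sum_univ_three, h0] at e1 e2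
  have e1 := e1.symm
  rw [e1] at e2
  funext i
  fin_cases i
  · exact h0
  · exact e1
  · simpa using e2.symm

/-- The subgroup of `G_{d,q}` generated by the elements having `1` as an eigenvalue of
multiplicity exactly `2` (i.e. those whose eigenspace `ker(γ − I₃)` has dimension `2`)
equals the set of diagonal matrices `diag(ξ^{(q³+1)a}, ξ^{(q³+1)b}, ξ^{(q³+1)c})`,
`a, b, c ∈ ℤ`. -/
theorem stmt_4 (d q : ℕ) (hd : 1 ≤ d) (hq : q < d) (hdq : Nat.gcd d q = 1)
    (ξ : ℂ) (hξ : IsPrimitiveRoot ξ d)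
    (A B : (Matrix (Fin 3) (Fin 3) ℂ)ˣ)
    (hA : (A : Matrix (Fin 3) (Fin 3) ℂ) = Matrix.diagonal ![1, ξ, ξ ^ q])
    (hB : (B : Matrix (Fin 3) (Fin 3) ℂ) = !![0,1,0; 0,0,1; 1,0,0])
    (g : (Matrix (Fin 3) (Fin 3) ℂ)ˣ) :
    g ∈ Subgroup.closure {γ : (Matrix (Fin 3) (Fin 3) ℂ)ˣ |
        γ ∈ Subgroup.closure {A, B} ∧
        Module.finrank ℂ
          (LinearMap.ker (Matrix.toLin' ((γ : Matrix (Fin 3) (Fin 3) ℂ) - 1))) = 2} ↔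
      ∃ a b c : ℤ,
        (g : Matrix (Fin 3) (Fin 3) ℂ) =
          Matrix.diagonal ![ξ ^ (((q : ℤ) ^ 3 + 1) * a), ξ ^ (((q : ℤ) ^ 3 + 1) * b),
            ξ ^ (((q : ℤ) ^ 3 + 1) * c)] := by
  obtain ⟨u, rfl⟩ : ∃ u : ℂˣ, (u : ℂ) = ξ := (hξ.isUnit (by omega))
  have hA' : A = TT u 0 1 q := by
    apply Units.ext
    rw [hA, TT_val]
    simp
  subst hA'
  have hT : ∀ a b c : ℤ, (g : Matrix (Fin 3) (Fin 3) ℂ) = Matrix.diagonal ![(u : ℂ) ^ a,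
      (u : ℂ) ^ b, (u : ℂ) ^ c] ↔ g = TT u a b c := by
    intro a b c
    rw [← TT_val, Units.val_inj]
  simp only [hT]
  clear hT
  constructor
  · intro hg
    induction hg using Subgroup.closure_induction with
    | one => exact ⟨0, 0, 0, by simp [TT_zero]⟩
    | mul x y hx hy ihx ihy =>
      obtain ⟨a, b, c, rfl⟩ := ihx
      obtain ⟨a', b', c', rfl⟩ := ihy
      exact ⟨a + a', b + b', c + c', by rw [TT_mul]; congr 1 <;> ring⟩
    | inv x hx ihx =>
      obtain ⟨a, b, c, rfl⟩ := ihx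
      exact ⟨-a, -b, -c, by rw [TT_inv]; congr 1 <;> ring⟩
    | mem x hx =>
      obtain ⟨hx, hr⟩ := hx
      obtain ⟨a, b, c, k, rfl⟩ := mem_form u q B hB x hx
      have hk : B ^ k = B ^ (k % 3) := by
        conv_lhs => rw [← Int.emod_add_mul_ediv k 3, _root_.zpow_add, _root_.zpow_mul]
        have := B_cube B hB
        simp [show B ^ (3 : ℤ) = 1 from mod_cast this]
      rw [hk] at hr ⊢
      have hk3 : k % 3 = 0 ∨ k % 3 = 1 ∨ k % 3 = 2 := by omega
      rcases hk3 with h | h | h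
      · rw [h, zpow_zero, mul_one] at hr ⊢
        exact refl_case u q a b c hr
      · exfalso
        rw [h, zpow_one] at hr
        rw [LL] at hr
        have := hr.symm.le.trans (finrank_le _ 0 (k1 u B hB _ _ _))
        omega
      · exfalso
        rw [h] at hr
        rw [LL] at hr
        have := hr.symm.le.trans (finrank_le _ 0 (k2 u B hB _ _ _))
        omega
  · rintro ⟨a, b, c, rfl⟩
    have : TT u (((q : ℤ) ^ 3 + 1) * a) (((q : ℤ) ^ 3 + 1) * b) (((q : ℤ) ^ 3 + 1) * c) =
        TT u (((q : ℤ) ^ 3 + 1) * a) 0 0 * TT u 0 (((q : ℤ) ^ 3 + 1) * b) 0 *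
        TT u 0 0 (((q : ℤ) ^ 3 + 1) * c) := by
      simp [TT_mul]
    rw [this]
    refine mul_mem (mul_mem ?_ ?_) ?_
    · by_cases h : (u : ℂ) ^ (((q : ℤ) ^ 3 + 1) * a) = 1
      · refine mem_of_eq_one _ ?_
        rw [← TT_zero u]
        apply Units.ext
        rw [TT_val, TT_val, h, zpow_zero]
      · apply Subgroup.subset_closure
        refine ⟨?_, ?_⟩
        · convert LL_mem u q B hB (-a * q) a (a * q ^ 2) using 1
          rw [LL]
          congr 1 <;> ring
        · refine refl_rank u _ _ _ 0 ?_
          intro i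
          fin_cases i <;> simp [h]
    · by_cases h : (u : ℂ) ^ (((q : ℤ) ^ 3 + 1) * b) = 1
      · refine mem_of_eq_one _ ?_
        rw [← TT_zero u]
        apply Units.ext
        rw [TT_val, TT_val, h, zpow_zero]
      · apply Subgroup.subset_closure
        refine ⟨?_, ?_⟩
        · convert LL_mem u q B hB b (b * q ^ 2) (-b * q) using 1
          rw [LL]
          congr 1 <;> ring
        · refine refl_rank u _ _ _ 1 ?_
          intro i
          fin_cases i <;> simp [h]
    · by_cases h : (u : ℂ) ^ (((q : ℤ) ^ 3 + 1) * c) = 1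
      · refine mem_of_eq_one _ ?_
        rw [← TT_zero u]
        apply Units.ext
        rw [TT_val, TT_val, h, zpow_zero]
      · apply Subgroup.subset_closure
        refine ⟨?_, ?_⟩
        · convert LL_mem u q B hB (c * q ^ 2) (-c * q) c using 1
          rw [LL]
          congr 1 <;> ring
        · refine refl_rank u _ _ _ 2 ?_
          intro i
          fin_cases i <;> simp [h]
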